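/- Let n, m be positive natural numbers. For vectors x₁, y₁, z₁, w₁ ∈ ℂⁿ and x₂, y₂, z₂, w₂ ∈ ℂᵐ, consider the rank-one matrices T₁ = x₁ y₁* ∈ Mₙ(ℂ) (i.e. (T₁)ᵢⱼ = x₁(i)·conj(y₁(j))), T₂ = x₂ y₂* ∈ Mₘ(ℂ), S₁ = z₁ w₁* ∈ Mₙ(ℂ), S₂ = z₂ w₂* ∈ Mₘ(ℂ), and equip square complex matrices with the spectral norm (operator norm induced by the Euclidean ℓ² norm). If the Kronecker product T₁ ⊗ T₂ is Birkhoff-James orthogonal to S₁ ⊗ S₂ in M_{nm}(ℂ) with the spectral norm, then T₁ ⊥_BJ S₁ in Mₙ(ℂ) or T₂ ⊥_BJ S₂ in Mₘ(ℂ). -/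

import Mathlib

open Kronecker
open scoped Matrix.Norms.L2Operator ComplexConjugate

/-!
Embed matrices into Euclidean space by listing their entries. The spectral norm is at most the
Frobenius norm, the two agree on a rank-one matrix `T = x yᵀ`, and pairing with `T` is the
functional `A ↦ ⟪x, A ȳ⟫`, whose norm with respect to the spectral norm is at most `‖x‖ ‖y‖`. Hence
`T` is Birkhoff-James orthogonal to `S` in the spectral norm exactly when it is orthogonal to `S`
for the Frobenius inner product `tr (Tᴴ S)`, which is multiplicative under Kronecker products.
-/

open Matrix WithLp

open scoped InnerProductSpace

/-- Birkhoff-James orthogonality of `u` to `v` over the scalar field `𝕜`: no multiple of `v` added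
to `u` decreases its norm. The relation is not symmetric in general. -/
def BirkhoffJamesOrthogonal (𝕜 : Type*) {E : Type*} [Norm E] [Add E] [SMul 𝕜 E] (u v : E) : Prop :=
  ∀ α : 𝕜, ‖u + α • v‖ ≥ ‖u‖

section InnerProductSpace

variable {𝕜 E H : Type*} [RCLike 𝕜] [NormedAddCommGroup H] [InnerProductSpace 𝕜 H]

theorem BirkhoffJamesOrthogonal.inner_eq_zero {u v : H} (h : BirkhoffJamesOrthogonal 𝕜 u v) :
    ⟪u, v⟫_𝕜 = 0 := by
  have norm_eq_iInf : ‖u - 0‖ = ⨅ w : 𝕜 ∙ v, ‖u - w‖ := by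
    refine le_antisymm (le_ciInf ?_) (ciInf_le ⟨0, ?_⟩ (0 : 𝕜 ∙ v))
    · rintro ⟨w, hw⟩
      obtain ⟨α, rfl⟩ := Submodule.mem_span_singleton.1 hw
      simpa [sub_eq_add_neg] using h (-α)
    · rintro _ ⟨w, rfl⟩
      exact norm_nonneg _
  simpa using ((𝕜 ∙ v).norm_eq_iInf_iff_inner_eq_zero (zero_mem _)).1 norm_eq_iInf v
    (Submodule.mem_span_singleton_self v)

theorem norm_le_of_inner_eq_inner_self {u v : H} {c : ℝ} (hc : 0 ≤ c)
    (hbound : ‖⟪u, v⟫_𝕜‖ ≤ ‖u‖ * c) (hinner : ⟪u, v⟫_𝕜 = ⟪u, u⟫_𝕜) : ‖u‖ ≤ c := by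
  rcases (norm_nonneg u).eq_or_lt with hzero | hpos
  · exact hzero ▸ hc
  · rw [hinner, ← inner_self_re_eq_norm, inner_self_eq_norm_mul_norm] at hbound
    exact le_of_mul_le_mul_left hbound hpos

theorem birkhoffJamesOrthogonal_iff_inner_map_eq_zero [SeminormedAddCommGroup E] [Module 𝕜 E]
    {Φ : E →ₗ[𝕜] H} (hΦ : ∀ A, ‖A‖ ≤ ‖Φ A‖) {T : E}
    (hT : ∀ B, ‖⟪Φ T, Φ B⟫_𝕜‖ ≤ ‖Φ T‖ * ‖B‖) (S : E) :
    BirkhoffJamesOrthogonal 𝕜 T S ↔ ⟪Φ T, Φ S⟫_𝕜 = 0 := by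
  refine ⟨fun h => BirkhoffJamesOrthogonal.inner_eq_zero fun α => ?_, fun h α => ?_⟩
  · calc ‖Φ T‖ ≤ ‖T‖ := norm_le_of_inner_eq_inner_self (norm_nonneg _) (hT T) rfl
      _ ≤ ‖T + α • S‖ := h α
      _ ≤ ‖Φ (T + α • S)‖ := hΦ _
      _ = ‖Φ T + α • Φ S‖ := by rw [map_add, map_smul]
  · have inner_eq : ⟪Φ T, Φ (T + α • S)⟫_𝕜 = ⟪Φ T, Φ T⟫_𝕜 := by
      rw [map_add, map_smul, inner_add_right, inner_smul_right, h, mul_zero, add_zero]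
    exact (hΦ T).trans (norm_le_of_inner_eq_inner_self (norm_nonneg _) (hT _) inner_eq)

end InnerProductSpace

section RankOne

variable {𝕜 m n p q : Type*} [RCLike 𝕜]

theorem vecMulVec_kronecker_vecMulVec {R : Type*} [CommSemigroup R] (x₁ : m → R) (y₁ : n → R)
    (x₂ : p → R) (y₂ : q → R) :
    vecMulVec x₁ y₁ ⊗ₖ vecMulVec x₂ y₂ =
      vecMulVec (fun i => x₁ i.1 * x₂ i.2) (fun j => y₁ j.1 * y₂ j.2) := by
  ext i j
  exact mul_mul_mul_comm _ _ _ _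

/-- The entries of a matrix, listed column by column as in `Matrix.vec`, as a vector of Euclidean
space. Its norm is the Frobenius norm, which is not available as an instance next to the spectral
norm. -/
def euclideanVec (𝕜 m n : Type*) [RCLike 𝕜] : Matrix m n 𝕜 →ₗ[𝕜] EuclideanSpace 𝕜 (n × m) where
  toFun A := toLp 2 (vec A)
  map_add' _ _ := rfl
  map_smul' _ _ := rfl

theorem euclideanVec_apply (A : Matrix m n 𝕜) (i : m) (j : n) :
    euclideanVec 𝕜 m n A (j, i) = A i j :=
  rfl

variable [Fintype m] [Fintype n] [Fintype p] [Fintype q]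

theorem norm_euclideanVec_eq_frobenius_norm (A : Matrix m n 𝕜) :
    ‖euclideanVec 𝕜 m n A‖ = frobeniusNormedAddCommGroup.toNorm.norm A := by
  rw [frobenius_norm_def, EuclideanSpace.norm_eq, Real.sqrt_eq_rpow, Fintype.sum_prod_type_right]
  simp [euclideanVec_apply]

theorem inner_euclideanVec (A B : Matrix m n 𝕜) :
    ⟪euclideanVec 𝕜 m n A, euclideanVec 𝕜 m n B⟫_𝕜 = trace (Aᴴ * B) := by
  rw [← star_vec_dotProduct_vec, dotProduct_comm]
  rfl

theorem inner_euclideanVec_kronecker (A₁ B₁ : Matrix m n 𝕜) (A₂ B₂ : Matrix p q 𝕜) :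
    ⟪euclideanVec 𝕜 _ _ (A₁ ⊗ₖ A₂), euclideanVec 𝕜 _ _ (B₁ ⊗ₖ B₂)⟫_𝕜 =
      ⟪euclideanVec 𝕜 _ _ A₁, euclideanVec 𝕜 _ _ B₁⟫_𝕜 *
        ⟪euclideanVec 𝕜 _ _ A₂, euclideanVec 𝕜 _ _ B₂⟫_𝕜 := by
  simp only [inner_euclideanVec, conjTranspose_kronecker, ← mul_kronecker_mul, trace_kronecker]

theorem inner_euclideanVec_vecMulVec (x : m → 𝕜) (y : n → 𝕜) (A : Matrix m n 𝕜) :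
    ⟪euclideanVec 𝕜 m n (vecMulVec x y), euclideanVec 𝕜 m n A⟫_𝕜 =
      ⟪toLp 2 x, toLp 2 (A *ᵥ star y)⟫_𝕜 := by
  rw [inner_euclideanVec, conjTranspose_vecMulVec, vecMulVec_mul, trace_vecMulVec,
    EuclideanSpace.inner_toLp_toLp, dotProduct_comm, ← dotProduct_mulVec, dotProduct_comm]

theorem norm_euclideanVec_vecMulVec (x : m → 𝕜) (y : n → 𝕜) :
    ‖euclideanVec 𝕜 m n (vecMulVec x y)‖ = ‖toLp 2 x‖ * ‖toLp 2 y‖ := by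
  rw [← sq_eq_sq₀ (norm_nonneg _) (by positivity), mul_pow]
  simp only [EuclideanSpace.norm_sq_eq, Fintype.sum_prod_type_right, Finset.sum_mul_sum]
  simp [euclideanVec_apply, vecMulVec_apply, mul_pow]

variable [DecidableEq n] [DecidableEq q]

theorem l2_opNorm_le_norm_euclideanVec (A : Matrix m n 𝕜) : ‖A‖ ≤ ‖euclideanVec 𝕜 m n A‖ := by
  refine ContinuousLinearMap.opNorm_le_bound _ (norm_nonneg _) fun v => ?_
  have frobenius_mul_le := frobenius_norm_mul A (replicateCol Unit (ofLp v))
  rwa [← replicateCol_mulVec, frobenius_norm_replicateCol, frobenius_norm_replicateCol,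
    ← norm_euclideanVec_eq_frobenius_norm] at frobenius_mul_le

theorem norm_inner_euclideanVec_vecMulVec_le (x : m → 𝕜) (y : n → 𝕜) (A : Matrix m n 𝕜) :
    ‖⟪euclideanVec 𝕜 m n (vecMulVec x y), euclideanVec 𝕜 m n A⟫_𝕜‖ ≤
      ‖euclideanVec 𝕜 m n (vecMulVec x y)‖ * ‖A‖ := by
  have norm_star : ‖toLp 2 (star y)‖ = ‖toLp 2 y‖ := by simp [EuclideanSpace.norm_eq]
  calc ‖⟪euclideanVec 𝕜 m n (vecMulVec x y), euclideanVec 𝕜 m n A⟫_𝕜‖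
      = ‖⟪toLp 2 x, toLp 2 (A *ᵥ star y)⟫_𝕜‖ := by rw [inner_euclideanVec_vecMulVec]
    _ ≤ ‖toLp 2 x‖ * ‖toLp 2 (A *ᵥ star y)‖ := norm_inner_le_norm _ _
    _ ≤ ‖toLp 2 x‖ * (‖A‖ * ‖toLp 2 (star y)‖) := by
      gcongr
      exact l2_opNorm_mulVec A (toLp 2 (star y))
    _ = ‖euclideanVec 𝕜 m n (vecMulVec x y)‖ * ‖A‖ := by
      rw [norm_star, norm_euclideanVec_vecMulVec]
      ring

theorem birkhoffJamesOrthogonal_vecMulVec_iff (x : m → 𝕜) (y : n → 𝕜) (S : Matrix m n 𝕜) :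
    BirkhoffJamesOrthogonal 𝕜 (vecMulVec x y) S ↔
      ⟪euclideanVec 𝕜 m n (vecMulVec x y), euclideanVec 𝕜 m n S⟫_𝕜 = 0 :=
  birkhoffJamesOrthogonal_iff_inner_map_eq_zero l2_opNorm_le_norm_euclideanVec
    (norm_inner_euclideanVec_vecMulVec_le x y) S

theorem stmt12_general (x₁ : m → 𝕜) (y₁ : n → 𝕜) (x₂ : p → 𝕜) (y₂ : q → 𝕜)
    (S₁ : Matrix m n 𝕜) (S₂ : Matrix p q 𝕜) :
    BirkhoffJamesOrthogonal 𝕜 (vecMulVec x₁ y₁ ⊗ₖ vecMulVec x₂ y₂) (S₁ ⊗ₖ S₂) ↔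
      BirkhoffJamesOrthogonal 𝕜 (vecMulVec x₁ y₁) S₁ ∨
        BirkhoffJamesOrthogonal 𝕜 (vecMulVec x₂ y₂) S₂ := by
  rw [vecMulVec_kronecker_vecMulVec, birkhoffJamesOrthogonal_vecMulVec_iff,
    ← vecMulVec_kronecker_vecMulVec, inner_euclideanVec_kronecker, mul_eq_zero,
    birkhoffJamesOrthogonal_vecMulVec_iff, birkhoffJamesOrthogonal_vecMulVec_iff]

end RankOne

/-- For rank-one complex matrices `T₁ = x₁ y₁* ∈ Mₙ(ℂ)`,
`T₂ = x₂ y₂* ∈ Mₘ(ℂ)`, `S₁ = z₁ w₁* ∈ Mₙ(ℂ)`, `S₂ = z₂ w₂* ∈ Mₘ(ℂ)` and the spectral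
norm, if the Kronecker product `T₁ ⊗ T₂` is Birkhoff-James orthogonal to `S₁ ⊗ S₂` in
`M_{nm}(ℂ)`, then `T₁ ⊥_BJ S₁` in `Mₙ(ℂ)` or `T₂ ⊥_BJ S₂` in `Mₘ(ℂ)`. -/
theorem stmt12
    {n m : ℕ} (hn : 0 < n) (hm : 0 < m)
    (x₁ y₁ z₁ w₁ : Fin n → ℂ) (x₂ y₂ z₂ w₂ : Fin m → ℂ)
    (T₁ S₁ : Matrix (Fin n) (Fin n) ℂ) (T₂ S₂ : Matrix (Fin m) (Fin m) ℂ)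
    (hT₁ : T₁ = Matrix.of fun i j => x₁ i * conj (y₁ j))
    (hT₂ : T₂ = Matrix.of fun i j => x₂ i * conj (y₂ j))
    (hS₁ : S₁ = Matrix.of fun i j => z₁ i * conj (w₁ j))
    (hS₂ : S₂ = Matrix.of fun i j => z₂ i * conj (w₂ j))
    (hBJ : ∀ α : ℂ, ‖T₁ ⊗ₖ T₂ + α • (S₁ ⊗ₖ S₂)‖ ≥ ‖T₁ ⊗ₖ T₂‖) :
    (∀ α : ℂ, ‖T₁ + α • S₁‖ ≥ ‖T₁‖) ∨ (∀ α : ℂ, ‖T₂ + α • S₂‖ ≥ ‖T₂‖) := by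
  subst hT₁ hT₂
  exact (stmt12_general x₁ (star y₁) x₂ (star y₂) S₁ S₂).1 hBJ
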